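/- Let (W,S) be a Coxeter system and suppose W acts geometrically on a CAT(0) space X with fixed basepoint x₀ such that |∂X| > 2 and some generator s ∈ S acts on X as a reflection (as is the case for the natural action of W on its Davis complex). If the centralizer Z_s = { h ∈ W : sh = hs } of s in W is finite, then the boundary ∂X is a scrambled set. -/

import Mathlib

/-!
Write `F` for the fixed-point set of the reflection `s`. The argument uses the Coxeter structure
only through `s`; it concerns a geometric action of a group on a CAT(0) space.

*Boundedness of `F`* (`isBounded_fixed`). If `g • x₀` is within `R` of `F`, then `g⁻¹ * s * g`
moves `x₀` by at most `2 * R`, so properness leaves finitely many such conjugates; each of them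
determines `g` up to the finite centralizer of `s`. Hence finitely many balls cover `F`.

*The limit inferior* (`frequently_bdist_lt`). By equivariance, `g • α` and `g • β` are compared by
comparing the rays from `g⁻¹ • x₀` to `α` and `β`. As `F` is bounded, every ray ends on one of the
two sides of `F`. If `α` and `β` lie on the same side and `g⁻¹ • x₀` is deep in the other side,
then both rays pass through `F` after a long time, so by convexity of the metric they are close at
all moderate times; the action of `s` on the boundary guarantees that both sides contain infinitely
many such orbit points. If instead `g • α` and `g • β` were on different sides of `F` for every
`g`, then each translate of `F` would meet the union of the rays from `x₀` to `α` and `β`. The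
space would then be a bounded neighbourhood of that union, which is impossible in the presence of
a third boundary point (`exists_same_side`).

*The limit superior* (`exists_frequently_le_bdist`). Let `ξ` be the ray from `x₀` to `α` and let
`z` be a far point on the ray from `x₀` to `β ≠ α`. By Stewart's inequality the convex function
`t ↦ dist (ξ t) z` has mean slope at least `-1 + δ` on some interval `[0, t₀]`, where `δ > 0` and
`t₀` do not depend on `z`; hence its slopes beyond `t₀` are at least `-1 + δ` too. Consequently the rays from `ξ t` to `α` and to
`β` diverge with speed at least `δ`, uniformly in large `t`. Orbit points near `ξ t` provide the
group elements.
-/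

/-- `γ` parametrizes a geodesic segment from `x` to `y` by arc length:
it is an isometric embedding of `[0, dist x y]` with `γ 0 = x` and `γ (dist x y) = y`. -/
def IsGeodesicFrom {X : Type*} [MetricSpace X] (γ : ℝ → X) (x y : X) : Prop :=
  γ 0 = x ∧ γ (dist x y) = y ∧
    ∀ s ∈ Set.Icc (0 : ℝ) (dist x y), ∀ t ∈ Set.Icc (0 : ℝ) (dist x y),
      dist (γ s) (γ t) = |s - t|

/-- A geodesic space: every pair of points is joined by a geodesic. -/
def GeodesicSpace (X : Type*) [MetricSpace X] : Prop :=
  ∀ x y : X, ∃ γ : ℝ → X, IsGeodesicFrom γ x y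

/-- The comparison point in the Euclidean plane: the point at arc-length parameter `s`
on the segment from `p` to `q`, where `D` is the length of that segment. -/
noncomputable def cmpPt (p q : EuclideanSpace ℝ (Fin 2)) (D s : ℝ) :
    EuclideanSpace ℝ (Fin 2) :=
  p + (s / D) • (q - p)

/-- A CAT(0) space: a geodesic space in which every geodesic triangle satisfies the
CAT(0) comparison inequality with respect to a comparison triangle in the Euclidean
plane `ℝ²` with the same side lengths. -/
def CAT0 (X : Type*) [MetricSpace X] : Prop :=
  GeodesicSpace X ∧
    ∀ (p q r : X) (γ γ' : ℝ → X), IsGeodesicFrom γ p q → IsGeodesicFrom γ' p r →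
      ∀ pc qc rc : EuclideanSpace ℝ (Fin 2),
        dist pc qc = dist p q → dist pc rc = dist p r → dist qc rc = dist q r →
        ∀ s ∈ Set.Icc (0 : ℝ) (dist p q), ∀ t ∈ Set.Icc (0 : ℝ) (dist p r),
          dist (γ s) (γ' t) ≤ dist (cmpPt pc qc (dist p q) s) (cmpPt pc rc (dist p r) t)

/-- A geodesic ray: an isometric embedding of `[0, ∞)`. -/
def IsGeodesicRay {X : Type*} [MetricSpace X] (ξ : ℝ → X) : Prop :=
  ∀ s ∈ Set.Ici (0 : ℝ), ∀ t ∈ Set.Ici (0 : ℝ), dist (ξ s) (ξ t) = |s - t|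

/-- Two rays are asymptotic if they are at bounded distance from each other. -/
def Asymptotic {X : Type*} [MetricSpace X] (ξ ζ : ℝ → X) : Prop :=
  ∃ C : ℝ, ∀ t ≥ (0 : ℝ), dist (ξ t) (ζ t) ≤ C

/-- The action of `G` on `X` is by isometries. -/
def IsometricAction (G X : Type*) [Group G] [MetricSpace X] [MulAction G X] : Prop :=
  ∀ (g : G) (x y : X), dist (g • x) (g • y) = dist x y

/-- The action of `G` on `X` is (metrically) proper. -/
def ProperAction (G X : Type*) [Group G] [MetricSpace X] [MulAction G X] : Prop :=
  ∀ (x : X) (R : ℝ), {g : G | dist x (g • x) ≤ R}.Finite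

/-- The action of `G` on `X` is cocompact: some (hence any) orbit is coarsely dense. -/
def CocompactAction (G X : Type*) [Group G] [MetricSpace X] [MulAction G X] : Prop :=
  ∀ x : X, ∃ R > (0 : ℝ), ∀ y : X, ∃ g : G, dist y (g • x) ≤ R

/-- A geometric action: proper and cocompact, by isometries. -/
def GeometricAction (G X : Type*) [Group G] [MetricSpace X] [MulAction G X] : Prop :=
  IsometricAction G X ∧ ProperAction G X ∧ CocompactAction G X

/-- A bundled presentation of the boundary `∂X` of a proper CAT(0) space `X`,
together with the induced action of `G`.  The type `Bd` plays the role of `∂X`: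
`ray x α` is the unique geodesic ray issuing from `x` in the asymptotic class `α`,
every geodesic ray is asymptotic to exactly one such ray, and the `G`-action on `Bd`
is the one induced by the action on rays, `g • [ξ] = [g ∘ ξ]`. -/
structure BoundaryStruct (G X Bd : Type*) [Group G] [MetricSpace X]
    [MulAction G X] [MulAction G Bd] where
  ray : X → Bd → ℝ → X
  isRay : ∀ (x : X) (α : Bd), IsGeodesicRay (ray x α)
  ray_start : ∀ (x : X) (α : Bd), ray x α 0 = x
  ray_asymp : ∀ (x y : X) (α : Bd), Asymptotic (ray x α) (ray y α)
  ray_inj : ∀ (x : X) (α β : Bd), Asymptotic (ray x α) (ray x β) → α = β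
  ray_surj : ∀ ξ : ℝ → X, IsGeodesicRay ξ → ∃ α : Bd, Asymptotic ξ (ray (ξ 0) α)
  equivariant : ∀ (g : G) (x : X) (α : Bd) (t : ℝ), g • ray x α t = ray (g • x) (g • α) t

/-- The metric `d_{∂X}` on the boundary with respect to the basepoint `x₀`:
`d_{∂X}(α,β) = Σ_{i=1}^∞ min { d(ξ_{x₀,α}(i), ξ_{x₀,β}(i)), 2⁻ⁱ }`. -/
noncomputable def bdist {G X Bd : Type*} [Group G] [MetricSpace X]
    [MulAction G X] [MulAction G Bd] (B : BoundaryStruct G X Bd) (x₀ : X)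
    (α β : Bd) : ℝ :=
  ∑' i : ℕ, min (dist (B.ray x₀ α (i + 1)) (B.ray x₀ β (i + 1))) ((1 : ℝ) / 2 ^ (i + 1))

/-- The boundary is a scrambled set: for all distinct `α, β ∈ ∂X`,
`limsup { d_{∂X}(gα, gβ) : g ∈ G } > 0` and `liminf { d_{∂X}(gα, gβ) : g ∈ G } = 0`
(limit superior/inferior being taken along the cofinite filter on `G`). -/
def IsScrambled {G X Bd : Type*} [Group G] [MetricSpace X]
    [MulAction G X] [MulAction G Bd] (B : BoundaryStruct G X Bd) (x₀ : X) : Prop :=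
  ∀ α β : Bd, α ≠ β →
    0 < Filter.limsup (fun g : G => bdist B x₀ (g • α) (g • β)) Filter.cofinite ∧
    Filter.liminf (fun g : G => bdist B x₀ (g • α) (g • β)) Filter.cofinite = 0

/-- The boundary has more than two points. -/
def MoreThanTwo (Bd : Type*) : Prop :=
  ∃ a b c : Bd, a ≠ b ∧ a ≠ c ∧ b ≠ c

/-- A subset of a geodesic space is (geodesically) convex if every geodesic between two
of its points stays in it. -/
def GeodConvex {X : Type*} [MetricSpace X] (A : Set X) : Prop :=
  ∀ x ∈ A, ∀ y ∈ A, ∀ γ : ℝ → X, IsGeodesicFrom γ x y →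
    ∀ t ∈ Set.Icc (0 : ℝ) (dist x y), γ t ∈ A

/-- An element `r` of a group acting by isometries on a geodesic space `X` acts as a
*reflection* of `X` if `r²` acts as the identity, the complement of the fixed-point set
`F_r` has exactly two connected components, both convex, and `r` interchanges them. -/
def ActsAsReflection (G : Type*) {X : Type*} [Group G] [MetricSpace X] [MulAction G X]
    (r : G) : Prop :=
  (∀ x : X, r • r • x = x) ∧
  ∃ a b : X,
    a ∈ ({x : X | r • x = x}ᶜ) ∧ b ∈ ({x : X | r • x = x}ᶜ) ∧
    connectedComponentIn ({x : X | r • x = x}ᶜ) a ≠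
      connectedComponentIn ({x : X | r • x = x}ᶜ) b ∧
    connectedComponentIn ({x : X | r • x = x}ᶜ) a ∪
        connectedComponentIn ({x : X | r • x = x}ᶜ) b = ({x : X | r • x = x}ᶜ) ∧
    GeodConvex (connectedComponentIn ({x : X | r • x = x}ᶜ) a) ∧
    GeodConvex (connectedComponentIn ({x : X | r • x = x}ᶜ) b) ∧
    (fun y => r • y) '' connectedComponentIn ({x : X | r • x = x}ᶜ) a =
      connectedComponentIn ({x : X | r • x = x}ᶜ) b

/-- The (right) descent set `S(w) = { s ∈ S : ℓ(ws) < ℓ(w) }` of `w`. -/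
def descentSet {B W : Type*} [Group W] {M : CoxeterMatrix B}
    (cs : CoxeterSystem M W) (w : W) : Set B :=
  {i : B | cs.IsRightDescent w i}

/-- A Coxeter matrix is right-angled if `m(s,t) ∈ {2, ∞}` for all `s ≠ t`
(`∞` being encoded as `0`). -/
def CoxeterMatrix.RightAngled {B : Type*} (M : CoxeterMatrix B) : Prop :=
  ∀ i j : B, i ≠ j → M.M i j = 2 ∨ M.M i j = 0

/-- A Coxeter system `(W,S)` is irreducible if there is no nonempty proper subset
`T ⊆ S` such that `W` decomposes as the direct product of the parabolic subgroups
`W_T` and `W_{S∖T}`. -/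
def CoxeterSystem.Irreducible {B W : Type*} [Group W] {M : CoxeterMatrix B}
    (cs : CoxeterSystem M W) : Prop :=
  ¬ ∃ T : Set B, T.Nonempty ∧ T ≠ Set.univ ∧
    (∀ g ∈ Subgroup.closure (cs.simple '' T),
      ∀ h ∈ Subgroup.closure (cs.simple '' Tᶜ), Commute g h) ∧
    Subgroup.closure (cs.simple '' T) ⊓ Subgroup.closure (cs.simple '' Tᶜ) = ⊥ ∧
    Subgroup.closure (cs.simple '' T) ⊔ Subgroup.closure (cs.simple '' Tᶜ) = ⊤

open Filter Set

/-! ### Comparison triangles and convexity of the metric -/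

lemma exists_comparison_triangle {X : Type*} [MetricSpace X] (p q r : X) :
    ∃ pc qc rc : EuclideanSpace ℝ (Fin 2),
      dist pc qc = dist p q ∧ dist pc rc = dist p r ∧ dist qc rc = dist q r := by
  have h1 := dist_triangle p q r
  have h2 := dist_triangle p r q
  have h3 := dist_triangle q p r
  rw [dist_comm r q] at h2
  rw [dist_comm q p] at h3
  have ha : 0 ≤ dist p q := dist_nonneg
  have hb : 0 ≤ dist p r := dist_nonneg
  have hc : 0 ≤ dist q r := dist_nonneg
  generalize dist p q = a at *
  generalize dist p r = b at *
  generalize dist q r = c at *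
  set x : ℝ := (a ^ 2 + b ^ 2 - c ^ 2) / (2 * a) with hx
  have hxy : 2 * a * x = a ^ 2 + b ^ 2 - c ^ 2 := by
    rcases ha.eq_or_lt with h | h
    · -- a degenerate side: here `x = 0` by the convention for division by zero, and `b = c`
      have : b = c := by linarith
      subst this
      rw [← h]; ring
    · rw [hx]; field_simp
  have hxb : x ^ 2 ≤ b ^ 2 := by
    rcases ha.eq_or_lt with h | h
    · have : x = 0 := by rw [hx, ← h]; simp
      rw [this, zero_pow two_ne_zero]; exact sq_nonneg b
    · apply sq_le_sq'
      · have : 0 ≤ 2 * a * (x + b) := by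
          rw [mul_add, hxy]; nlinarith
        by_contra! hlt
        nlinarith
      · have : 0 ≤ 2 * a * (b - x) := by
          rw [mul_sub, hxy]; nlinarith
        by_contra! hlt
        nlinarith
  have hy := Real.sq_sqrt (sub_nonneg.2 hxb)
  refine ⟨!₂[0, 0], !₂[a, 0], !₂[x, Real.sqrt (b ^ 2 - x ^ 2)], ?_, ?_, ?_⟩
  · rw [EuclideanSpace.dist_eq, Real.sqrt_eq_iff_eq_sq (by positivity) ha]
    simp [Fin.sum_univ_two, Real.dist_eq, sq_abs]
  · rw [EuclideanSpace.dist_eq, Real.sqrt_eq_iff_eq_sq (by positivity) hb]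
    simp [Fin.sum_univ_two, Real.dist_eq, sq_abs]
    linarith
  · rw [EuclideanSpace.dist_eq, Real.sqrt_eq_iff_eq_sq (by positivity) hc]
    simp [Fin.sum_univ_two, Real.dist_eq, sq_abs]
    nlinarith

lemma IsGeodesicFrom.reverse {X : Type*} [MetricSpace X] {γ : ℝ → X} {x y : X}
    (h : IsGeodesicFrom γ x y) : IsGeodesicFrom (fun u => γ (dist x y - u)) y x := by
  obtain ⟨h0, h1, h2⟩ := h
  refine ⟨by simpa using h1, by simpa [dist_comm y x] using h0, ?_⟩
  intro s hs t ht
  rw [dist_comm y x] at hs ht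
  rw [h2 _ ⟨by linarith [hs.2], by linarith [hs.1]⟩ _ ⟨by linarith [ht.2], by linarith [ht.1]⟩,
    abs_sub_comm]
  congr 1; ring

/-- Two geodesics issuing from the same point contract linearly towards it. -/
lemma CAT0.dist_le_mul {X : Type*} [MetricSpace X] (hX : CAT0 X) {p q r : X} {γ γ' : ℝ → X}
    (h : IsGeodesicFrom γ p q) (h' : IsGeodesicFrom γ' p r) {l : ℝ} (hl : l ∈ Icc (0 : ℝ) 1) :
    dist (γ (l * dist p q)) (γ' (l * dist p r)) ≤ l * dist q r := by
  obtain ⟨pc, qc, rc, h1, h2, h3⟩ := exists_comparison_triangle p q r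
  have ha : 0 ≤ dist p q := dist_nonneg
  have hb : 0 ≤ dist p r := dist_nonneg
  have key := hX.2 p q r γ γ' h h' pc qc rc h1 h2 h3 (l * dist p q)
    ⟨by nlinarith [hl.1], by nlinarith [hl.2]⟩ (l * dist p r)
    ⟨by nlinarith [hl.1], by nlinarith [hl.2]⟩
  refine key.trans (le_of_eq ?_)
  -- the scaling also holds for a degenerate side, where the displacement vanishes
  have aux : ∀ (u v : EuclideanSpace ℝ (Fin 2)) (D : ℝ), dist u v = D →
      cmpPt u v D (l * D) = u + l • (v - u) := by
    intro u v D hD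
    unfold cmpPt
    rcases eq_or_ne D 0 with h0 | h0
    · rw [h0, dist_eq_zero] at hD
      simp [hD]
    · rw [mul_div_cancel_right₀ _ h0]
  rw [aux _ _ _ h1, aux _ _ _ h2, dist_add_left, dist_smul₀, dist_sub_right, h3,
    Real.norm_of_nonneg hl.1]

/-- Stewart's inequality for the distance from `r` to a point of a side issuing from `p`. -/
lemma CAT0.stewart {X : Type*} [MetricSpace X] (hX : CAT0 X) {p q r : X} {γ : ℝ → X}
    (h : IsGeodesicFrom γ p q) {l : ℝ} (hl : l ∈ Icc (0 : ℝ) 1) :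
    dist (γ (l * dist p q)) r ^ 2 ≤
      (1 - l) * dist p r ^ 2 + l * dist q r ^ 2 - l * (1 - l) * dist p q ^ 2 := by
  obtain ⟨γ', h'⟩ := hX.1 p r
  obtain ⟨pc, qc, rc, h1, h2, h3⟩ := exists_comparison_triangle p q r
  have ha : 0 ≤ dist p q := dist_nonneg
  have key := hX.2 p q r γ γ' h h' pc qc rc h1 h2 h3 (l * dist p q)
    ⟨by nlinarith [hl.1], by nlinarith [hl.2]⟩ (dist p r) ⟨dist_nonneg, le_rfl⟩
  rw [h'.2.1] at key
  have e1 : cmpPt pc qc (dist p q) (l * dist p q) = pc + l • (qc - pc) := by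
    unfold cmpPt
    rcases eq_or_ne (dist p q) 0 with h0 | h0
    · rw [h0, dist_eq_zero] at h1
      simp [h1]
    · rw [mul_div_cancel_right₀ _ h0]
  have e2 : cmpPt pc rc (dist p r) (dist p r) = rc := by
    unfold cmpPt
    rcases eq_or_ne (dist p r) 0 with h0 | h0
    · rw [h0, dist_eq_zero] at h2
      simp [h2]
    · rw [div_self h0]; simp
  rw [e1, e2] at key
  refine (pow_le_pow_left₀ dist_nonneg key 2).trans (le_of_eq ?_)
  rw [← h1, ← h2, ← h3]
  simp only [EuclideanSpace.dist_eq, Fin.sum_univ_two, Real.dist_eq, sq_abs]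
  rw [Real.sq_sqrt (by positivity), Real.sq_sqrt (by positivity), Real.sq_sqrt (by positivity),
    Real.sq_sqrt (by positivity)]
  simp
  ring

/-- Convexity of the metric along two geodesics, both parametrized proportionally. -/
lemma CAT0.dist_le_convex {X : Type*} [MetricSpace X] (hX : CAT0 X) {p q p' q' : X}
    {γ γ' : ℝ → X} (h : IsGeodesicFrom γ p q) (h' : IsGeodesicFrom γ' p' q')
    {l : ℝ} (hl : l ∈ Icc (0 : ℝ) 1) :
    dist (γ (l * dist p q)) (γ' (l * dist p' q')) ≤ (1 - l) * dist p p' + l * dist q q' := by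
  obtain ⟨δ, hδ⟩ := hX.1 p q'
  have h1 := hX.dist_le_mul h hδ hl
  have h2 := hX.dist_le_mul hδ.reverse h'.reverse (l := 1 - l)
    ⟨by linarith [hl.2], by linarith [hl.1]⟩
  rw [dist_comm q' p, dist_comm q' p'] at h2
  have e1 : dist p q' - (1 - l) * dist p q' = l * dist p q' := by ring
  have e2 : dist p' q' - (1 - l) * dist p' q' = l * dist p' q' := by ring
  simp only [e1, e2] at h2
  have h3 := dist_triangle (γ (l * dist p q)) (δ (l * dist p q')) (γ' (l * dist p' q'))
  exact h3.trans (by linarith)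

/-! ### Geodesic rays -/

section Rays

variable {X : Type*} [MetricSpace X]

lemma IsGeodesicRay.dist_start {ξ : ℝ → X} (h : IsGeodesicRay ξ) {t : ℝ} (ht : 0 ≤ t) :
    dist (ξ 0) (ξ t) = t := by
  rw [h 0 self_mem_Ici t ht, zero_sub, abs_neg, abs_of_nonneg ht]

lemma IsGeodesicRay.isGeodesicFrom {ξ : ℝ → X} (h : IsGeodesicRay ξ) {t : ℝ} (ht : 0 ≤ t) :
    IsGeodesicFrom ξ (ξ 0) (ξ t) := by
  refine ⟨rfl, by rw [h.dist_start ht], fun u hu v hv => h u hu.1 v hv.1⟩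

lemma IsGeodesicRay.shift {ξ : ℝ → X} (h : IsGeodesicRay ξ) {a : ℝ} (ha : 0 ≤ a) :
    IsGeodesicRay (fun u => ξ (a + u)) := by
  intro u hu v hv
  rw [h _ (add_nonneg ha hu) _ (add_nonneg ha hv)]
  congr 1; ring

lemma IsGeodesicRay.continuousOn {ξ : ℝ → X} (h : IsGeodesicRay ξ) : ContinuousOn ξ (Ici 0) := by
  have : LipschitzOnWith 1 ξ (Ici 0) := by
    apply LipschitzOnWith.of_dist_le_mul
    intro u hu v hv
    rw [h u hu v hv, Real.dist_eq]; simp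
  exact this.continuousOn

lemma IsGeodesicRay.dist_le_of_start_eq (hX : CAT0 X) {ξ ζ : ℝ → X} (hξ : IsGeodesicRay ξ)
    (hζ : IsGeodesicRay ζ) (h0 : ξ 0 = ζ 0) {t u : ℝ} (ht : 0 ≤ t) (htu : t ≤ u) (hu : 0 < u) :
    dist (ξ t) (ζ t) ≤ t / u * dist (ξ u) (ζ u) := by
  have h2 := hζ.isGeodesicFrom hu.le
  rw [← h0] at h2
  have := hX.dist_le_mul (hξ.isGeodesicFrom hu.le) h2 (l := t / u)
    ⟨by positivity, by rw [div_le_one hu]; exact htu⟩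
  rw [hξ.dist_start hu.le, h0, hζ.dist_start hu.le, div_mul_cancel₀ _ hu.ne'] at this
  exact this

lemma IsGeodesicRay.dist_mono (hX : CAT0 X) {ξ ζ : ℝ → X} (hξ : IsGeodesicRay ξ)
    (hζ : IsGeodesicRay ζ) (h0 : ξ 0 = ζ 0) {t u : ℝ} (ht : 0 ≤ t) (htu : t ≤ u) :
    dist (ξ t) (ζ t) ≤ dist (ξ u) (ζ u) := by
  rcases (ht.trans htu).eq_or_lt with hu | hu
  · have : t = u := by linarith
    rw [this]
  · refine (hξ.dist_le_of_start_eq hX hζ h0 ht htu hu).trans ?_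
    have : t / u ≤ 1 := by rw [div_le_one hu]; exact htu
    nlinarith [dist_nonneg (x := ξ u) (y := ζ u)]

/-- The distance between asymptotic rays never exceeds the distance of their origins. -/
lemma Asymptotic.dist_le (hX : CAT0 X) {ξ ζ : ℝ → X} (hξ : IsGeodesicRay ξ)
    (hζ : IsGeodesicRay ζ) (h : Asymptotic ξ ζ) {t : ℝ} (ht : 0 ≤ t) :
    dist (ξ t) (ζ t) ≤ dist (ξ 0) (ζ 0) := by
  obtain ⟨C, hC⟩ := h
  have hC0 : 0 ≤ C := dist_nonneg.trans (hC 0 le_rfl)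
  apply le_of_forall_pos_le_add
  intro ε hε
  -- by convexity on `[0, N]` the excess is at most `t * C / N`
  set N : ℝ := t + t * C / ε + 1 with hN
  have hN0 : 0 < N := by positivity
  have htN : t ≤ N := by
    have : 0 ≤ t * C / ε := by positivity
    linarith
  have hl1 : t / N ≤ 1 := by rw [div_le_one hN0]; exact htN
  have hl0 : 0 ≤ t / N := by positivity
  have := hX.dist_le_convex (hξ.isGeodesicFrom hN0.le) (hζ.isGeodesicFrom hN0.le) (l := t / N)
    ⟨hl0, hl1⟩
  rw [hξ.dist_start hN0.le, hζ.dist_start hN0.le, div_mul_cancel₀ _ hN0.ne'] at this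
  have h1 : t / N * dist (ξ N) (ζ N) ≤ t / N * C :=
    mul_le_mul_of_nonneg_left (hC N hN0.le) hl0
  have h2 : t / N * C ≤ ε := by
    rw [div_mul_eq_mul_div, div_le_iff₀ hN0, hN]
    have : ε * (t * C / ε) = t * C := by field_simp
    nlinarith [mul_nonneg hε.le ht]
  nlinarith [mul_nonneg hl0 (dist_nonneg (x := ξ 0) (y := ζ 0))]

lemma IsGeodesicRay.convexOn_dist (hX : CAT0 X) {ξ : ℝ → X} (hξ : IsGeodesicRay ξ) (z : X) :
    ConvexOn ℝ (Ici 0) (fun t => dist (ξ t) z) := by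
  refine LinearOrder.convexOn_of_lt (convex_Ici 0) ?_
  intro x hx y hy hxy a b ha hb hab
  have hs := (hξ.shift hx).isGeodesicFrom (sub_nonneg.2 hxy.le)
  have hz : IsGeodesicFrom (fun _ : ℝ => z) z z := by
    refine ⟨rfl, rfl, fun s hs t ht => ?_⟩
    simp only [dist_self, Icc_self, mem_singleton_iff] at hs ht
    simp [hs, ht]
  have := hX.dist_le_convex hs hz (l := b) ⟨hb.le, by linarith⟩
  rw [(hξ.shift hx).dist_start (sub_nonneg.2 hxy.le)] at this
  simp only [smul_eq_mul]
  have e : x + b * (y - x) = a * x + b * y := by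
    have : a = 1 - b := by linarith
    rw [this]; ring
  have e2 : 1 - b = a := by linarith
  simpa [e, e2] using this

end Rays

/-! ### The metric on the boundary -/

section Boundary

variable {G X Bd : Type*} [Group G] [MetricSpace X] [MulAction G X] [MulAction G Bd]

lemma summable_half_pow : Summable (fun i : ℕ => (1 : ℝ) / 2 ^ (i + 1)) := by
  have := (summable_geometric_two).mul_right (1 / 2 : ℝ)
  refine this.congr fun i => ?_
  rw [pow_succ, div_pow, one_pow, one_div_mul_one_div]

lemma summable_bdist (Bo : BoundaryStruct G X Bd) (x₀ : X) (α β : Bd) :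
    Summable (fun i : ℕ =>
      min (dist (Bo.ray x₀ α (i + 1)) (Bo.ray x₀ β (i + 1))) ((1 : ℝ) / 2 ^ (i + 1))) :=
  Summable.of_nonneg_of_le (fun i => le_min dist_nonneg (by positivity))
    (fun i => min_le_right _ _) summable_half_pow

lemma bdist_nonneg (Bo : BoundaryStruct G X Bd) (x₀ : X) (α β : Bd) : 0 ≤ bdist Bo x₀ α β :=
  tsum_nonneg fun _ => le_min dist_nonneg (by positivity)

lemma bdist_le_tsum (Bo : BoundaryStruct G X Bd) (x₀ : X) (α β : Bd) :
    bdist Bo x₀ α β ≤ ∑' i : ℕ, (1 : ℝ) / 2 ^ (i + 1) :=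
  (summable_bdist Bo x₀ α β).tsum_le_tsum (fun _ => min_le_right _ _) summable_half_pow

lemma le_bdist (Bo : BoundaryStruct G X Bd) (x₀ : X) (α β : Bd) (n : ℕ)
    (h : 1 ≤ dist (Bo.ray x₀ α (n + 1)) (Bo.ray x₀ β (n + 1))) :
    (1 : ℝ) / 2 ^ (n + 1) ≤ bdist Bo x₀ α β := by
  refine le_trans (le_min ?_ le_rfl) ((summable_bdist Bo x₀ α β).le_tsum n
    fun i _ => le_min dist_nonneg (by positivity))
  refine le_trans ?_ h
  rw [div_le_one (by positivity)]
  exact one_le_pow₀ (by norm_num)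

/-- Rays that are close at one late time represent points that are close in `bdist`. -/
lemma exists_bdist_lt (hX : CAT0 X) (Bo : BoundaryStruct G X Bd) (x₀ : X) {ε : ℝ} (hε : 0 < ε) :
    ∃ n : ℕ, ∃ δ > 0, ∀ α β : Bd, dist (Bo.ray x₀ α n) (Bo.ray x₀ β n) ≤ δ →
      bdist Bo x₀ α β < ε := by
  have ht := tendsto_sum_nat_add (fun i : ℕ => (1 : ℝ) / 2 ^ (i + 1))
  obtain ⟨n, hn⟩ := (ht.eventually (gt_mem_nhds (half_pos hε))).exists
  refine ⟨n, ε / (2 * (n + 1)), by positivity, fun α β h => ?_⟩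
  unfold bdist
  have hs := summable_bdist Bo x₀ α β
  rw [← hs.sum_add_tsum_nat_add n]
  have h1 : ∑ i ∈ Finset.range n,
      min (dist (Bo.ray x₀ α (i + 1)) (Bo.ray x₀ β (i + 1))) ((1 : ℝ) / 2 ^ (i + 1)) ≤
      n * (ε / (2 * (n + 1))) := by
    refine (Finset.sum_le_card_nsmul _ _ (ε / (2 * (n + 1))) fun i hi => ?_).trans_eq (by simp)
    refine (min_le_left _ _).trans (le_trans ?_ h)
    have hi' : (i : ℝ) + 1 ≤ n := by exact_mod_cast Finset.mem_range.1 hi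
    exact (Bo.isRay x₀ α).dist_mono hX (Bo.isRay x₀ β)
      (by rw [Bo.ray_start, Bo.ray_start]) (by positivity) hi'
  have h2 := ((summable_nat_add_iff n).2 hs).tsum_le_tsum (fun _ => min_le_right _ _)
    ((summable_nat_add_iff n).2 summable_half_pow)
  have h3 : n * (ε / (2 * (n + 1))) ≤ ε / 2 := by
    rw [← mul_div_assoc, div_le_div_iff₀ (by positivity) (by positivity)]
    nlinarith
  linarith

lemma ray_smul_dist (hiso : IsometricAction G X) (Bo : BoundaryStruct G X Bd) (x₀ : X) (g : G)
    (α β : Bd) (t : ℝ) :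
    dist (Bo.ray x₀ (g • α) t) (Bo.ray x₀ (g • β) t) =
      dist (Bo.ray (g⁻¹ • x₀) α t) (Bo.ray (g⁻¹ • x₀) β t) := by
  rw [← hiso g (Bo.ray (g⁻¹ • x₀) α t), Bo.equivariant, Bo.equivariant, smul_inv_smul]

lemma BoundaryStruct.dist_ray_le (hX : CAT0 X) (Bo : BoundaryStruct G X Bd) (x y : X) (α : Bd)
    {t : ℝ} (ht : 0 ≤ t) : dist (Bo.ray x α t) (Bo.ray y α t) ≤ dist x y := by
  have := (Bo.ray_asymp x y α).dist_le hX (Bo.isRay x α) (Bo.isRay y α) ht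
  rwa [Bo.ray_start, Bo.ray_start] at this

lemma BoundaryStruct.ray_shift (hX : CAT0 X) (Bo : BoundaryStruct G X Bd) (x : X) (α : Bd)
    {a t : ℝ} (ha : 0 ≤ a) (ht : 0 ≤ t) :
    Bo.ray (Bo.ray x α a) α t = Bo.ray x α (a + t) := by
  have hs := (Bo.isRay x α).shift ha
  have h1 : Asymptotic (fun u => Bo.ray x α (a + u)) (Bo.ray (Bo.ray x α a) α) := by
    obtain ⟨C, hC⟩ := Bo.ray_asymp x (Bo.ray x α a) α
    refine ⟨a + C, fun u hu => ?_⟩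
    have h2 := Bo.isRay x α (a + u) (add_nonneg ha hu) u hu
    rw [add_sub_cancel_right, abs_of_nonneg ha] at h2
    linarith [dist_triangle (Bo.ray x α (a + u)) (Bo.ray x α u) (Bo.ray (Bo.ray x α a) α u),
      hC u hu]
  have := h1.dist_le hX hs (Bo.isRay _ α) ht
  simp only [add_zero, Bo.ray_start, dist_self] at this
  exact (dist_le_zero.1 this).symm

/-- If every group element carrying `x₀` near a late point of some ray has its inverse in `P`,
then `P` holds for infinitely many group elements. -/
lemma frequently_of_ray {ρ : ℝ → X} (hρ : IsGeodesicRay ρ) (x₀ : X) {R : ℝ}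
    (hR : ∀ y : X, ∃ g : G, dist y (g • x₀) ≤ R) {P : G → Prop}
    (hP : ∀ᶠ t in atTop, ∀ g : G, dist (ρ t) (g • x₀) ≤ R → P g⁻¹) :
    ∃ᶠ g in cofinite, P g := by
  rw [frequently_cofinite_iff_infinite]
  intro hfin
  obtain ⟨K, hK⟩ := (hfin.image (fun g => dist (ρ 0) (g⁻¹ • x₀))).bddAbove
  obtain ⟨t, ht, ht1, ht2⟩ :=
    (hP.and ((eventually_gt_atTop (K + R)).and (eventually_ge_atTop 0))).exists
  obtain ⟨g, hg⟩ := hR (ρ t)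
  have := hK ⟨g⁻¹, ht g hg, rfl⟩
  simp only [inv_inv] at this
  have h1 := dist_triangle (ρ 0) (g • x₀) (ρ t)
  rw [hρ.dist_start ht2, dist_comm (g • x₀)] at h1
  linarith

/-! ### Divergence of rays towards distinct boundary points -/

lemma exists_dist_pos (Bo : BoundaryStruct G X Bd) (x₀ : X) {α β : Bd} (h : α ≠ β) (K : ℝ) :
    ∃ t ≥ 0, K < dist (Bo.ray x₀ α t) (Bo.ray x₀ β t) := by
  by_contra! hc
  exact h (Bo.ray_inj x₀ α β ⟨K, hc⟩)

/-- The distance from a ray towards `α` to far points `N` of a ray towards `β ≠ α` does not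
decrease with unit speed: at a suitable time `t₀` it exceeds `N - t₀` by a margin uniform in
`N`. -/
lemma exists_margin (hX : CAT0 X) (Bo : BoundaryStruct G X Bd) (x₀ : X) {α β : Bd} (h : α ≠ β) :
    ∃ t₀ > 0, ∃ ε > 0, ∀ N ≥ max t₀ 1,
      N - t₀ + ε ≤ dist (Bo.ray x₀ α t₀) (Bo.ray x₀ β N) := by
  obtain ⟨t₀, ht, hc⟩ := exists_dist_pos Bo x₀ h 0
  set c := dist (Bo.ray x₀ α t₀) (Bo.ray x₀ β t₀) with hcdef
  have ht₀ : 0 < t₀ := by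
    rcases ht.eq_or_lt with h0 | h0
    · rw [hcdef, ← h0, Bo.ray_start, Bo.ray_start, dist_self] at hc
      exact absurd hc (lt_irrefl _)
    · exact h0
  -- the margin is chosen so that `3 * t₀ * ε < c ^ 2` and `ε ≤ 1`
  set ε := min 1 (c ^ 2 / (4 * t₀)) with hεdef
  have hε : 0 < ε := lt_min one_pos (by positivity)
  have hε1 : ε ≤ 1 := min_le_left _ _
  have hε2 : 4 * t₀ * ε ≤ c ^ 2 := by
    have := min_le_right 1 (c ^ 2 / (4 * t₀))
    rw [← hεdef, le_div_iff₀ (by positivity)] at this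
    linarith
  refine ⟨t₀, ht₀, ε, hε, fun N hN => ?_⟩
  have hN1 : t₀ ≤ N := (le_max_left _ _).trans hN
  have hN2 : 1 ≤ N := (le_max_right _ _).trans hN
  have hN0 : 0 < N := by linarith
  by_contra! hlt
  have hl : t₀ / N ∈ Icc (0 : ℝ) 1 := ⟨by positivity, by rw [div_le_one hN0]; exact hN1⟩
  have key := hX.stewart ((Bo.isRay x₀ β).isGeodesicFrom hN0.le) (r := Bo.ray x₀ α t₀) hl
  have e1 : dist (Bo.ray x₀ β 0) (Bo.ray x₀ α t₀) = t₀ := by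
    rw [Bo.ray_start, ← Bo.ray_start x₀ α, Bo.ray_start x₀ α]
    have := (Bo.isRay x₀ α).dist_start ht₀.le
    rwa [Bo.ray_start] at this
  rw [(Bo.isRay x₀ β).dist_start hN0.le, div_mul_cancel₀ _ hN0.ne', e1, dist_comm, ← hcdef,
    dist_comm (Bo.ray x₀ β N)] at key
  set φ := dist (Bo.ray x₀ α t₀) (Bo.ray x₀ β N)
  have hφ0 : 0 ≤ φ := dist_nonneg
  have hφ2 : φ ^ 2 ≤ (N - t₀ + ε) ^ 2 := pow_le_pow_left₀ hφ0 hlt.le 2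
  have h1 : t₀ / N * φ ^ 2 ≤ t₀ / N * (N - t₀ + ε) ^ 2 := mul_le_mul_of_nonneg_left hφ2 hl.1
  have h2 : (1 - t₀ / N) * t₀ ^ 2 + t₀ / N * (N - t₀ + ε) ^ 2 - t₀ / N * (1 - t₀ / N) * N ^ 2 =
      2 * t₀ * ε + t₀ / N * (ε ^ 2 - 2 * t₀ * ε) := by
    field_simp
    ring
  have h3 : t₀ / N * (ε ^ 2 - 2 * t₀ * ε) ≤ t₀ * ε := by
    have ha : t₀ / N ≤ t₀ := div_le_self ht₀.le hN2
    have hb : t₀ / N * ε ^ 2 ≤ t₀ * ε ^ 2 := mul_le_mul_of_nonneg_right ha (by positivity)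
    have hd : 0 ≤ t₀ / N * (2 * t₀ * ε) := mul_nonneg hl.1 (by positivity)
    have he : t₀ * ε ^ 2 ≤ t₀ * ε := by
      apply mul_le_mul_of_nonneg_left _ ht₀.le
      nlinarith
    nlinarith
  have h4 : 0 < t₀ * ε := by positivity
  linarith

/-- Along a ray towards `α`, the rays towards `α` and towards `β ≠ α` issuing from a late point
diverge with a speed bounded below. -/
lemma exists_divergence (hX : CAT0 X) (Bo : BoundaryStruct G X Bd) (x₀ : X) {α β : Bd}
    (h : α ≠ β) :
    ∃ t₀ > 0, ∃ δ > 0, ∀ t ≥ t₀, ∀ i > 0,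
      i * δ ≤ dist (Bo.ray x₀ α (t + i)) (Bo.ray (Bo.ray x₀ α t) β i) := by
  obtain ⟨t₀, ht₀, ε, hε, hm⟩ := exists_margin hX Bo x₀ h
  refine ⟨t₀, ht₀, ε / t₀, by positivity, fun t ht i hi => ?_⟩
  have ht0 : 0 < t := by linarith
  apply le_of_forall_pos_le_add
  intro η hη
  set N : ℝ := max t₀ 1 + t + i + i * (2 * t) / η with hN
  have hq : 0 ≤ i * (2 * t) / η := by positivity
  have hm1 : 0 < max t₀ 1 := lt_max_of_lt_left ht₀
  have hN0 : 0 < N := by linarith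
  have hN1 : max t₀ 1 ≤ N := by linarith
  have hmN := hm N hN1
  set z := Bo.ray x₀ β N with hz
  set y := Bo.ray x₀ α t with hy
  have hray := Bo.isRay x₀ α
  have hconv := hray.convexOn_dist hX z
  -- secant slopes of the convex function `t ↦ dist (ξ t) z`
  have h0z : dist (Bo.ray x₀ α 0) z = N := by
    have := (Bo.isRay x₀ β).dist_start hN0.le
    rw [Bo.ray_start] at this ⊢
    exact this
  have hs2 : (dist (Bo.ray x₀ α t₀) z - dist (Bo.ray x₀ α 0) z) / t₀ ≤
      (dist (Bo.ray x₀ α (t + i)) z - dist (Bo.ray x₀ α t) z) / i := by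
    have a1 := hconv.secant_mono (a := 0) (x := t₀) (y := t + i) self_mem_Ici
      (mem_Ici.2 ht₀.le) (mem_Ici.2 (by linarith)) ht₀.ne' (by linarith) (by linarith)
    have a2 := hconv.secant_mono (a := t + i) (x := 0) (y := t) (mem_Ici.2 (by linarith))
      self_mem_Ici (mem_Ici.2 ht0.le) (by linarith) (by linarith) ht0.le
    rw [← neg_div_neg_eq (dist (Bo.ray x₀ α 0) z - _), ← neg_div_neg_eq (dist (Bo.ray x₀ α t) z - _)]
      at a2
    simp only [neg_sub, sub_zero, add_sub_cancel_left] at a1 a2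
    exact a1.trans a2
  have hgap : -i + i * (ε / t₀) ≤ dist (Bo.ray x₀ α (t + i)) z - dist y z := by
    have b1 : -1 + ε / t₀ ≤ (dist (Bo.ray x₀ α t₀) z - dist (Bo.ray x₀ α 0) z) / t₀ := by
      rw [le_div_iff₀ ht₀, h0z, add_mul, div_mul_cancel₀ _ ht₀.ne']
      linarith
    have b2 := b1.trans hs2
    rw [le_div_iff₀ hi] at b2
    linarith
  -- the geodesic from `y` to `z` is close to the ray from `y` towards `β`
  obtain ⟨γ, hγ⟩ := hX.1 y z
  have hyx : dist x₀ y = t := by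
    have := hray.dist_start ht0.le
    rwa [Bo.ray_start] at this
  have hxz : dist x₀ z = N := by rwa [Bo.ray_start] at h0z
  set L := dist y z with hL
  have hL1 : N ≤ t + L := by
    have := dist_triangle x₀ y z
    linarith
  have hL2 : L ≤ t + N := by
    have := dist_triangle y x₀ z
    rw [dist_comm y x₀] at this
    linarith
  have hLi : i ≤ L := by linarith
  have hL0 : 0 < L := by linarith
  have hηr := Bo.isRay y β
  have hend : dist z (Bo.ray y β L) ≤ 2 * t := by
    have c1 := Bo.dist_ray_le hX x₀ y β hN0.le
    have c2 := hηr N hN0.le L hL0.le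
    have c3 : |N - L| ≤ t := abs_le.2 ⟨by linarith, by linarith⟩
    have := dist_triangle z (Bo.ray y β N) (Bo.ray y β L)
    linarith
  have hclose : dist (γ i) (Bo.ray y β i) ≤ η := by
    have hg2 := hηr.isGeodesicFrom hL0.le
    rw [Bo.ray_start] at hg2
    have c1 := hX.dist_le_mul hγ hg2 (l := i / L)
      ⟨by positivity, by rw [div_le_one hL0]; exact hLi⟩
    have c2 : dist y (Bo.ray y β L) = L := by
      have := hηr.dist_start hL0.le
      rwa [Bo.ray_start] at this
    rw [c2, ← hL, div_mul_cancel₀ _ hL0.ne'] at c1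
    refine c1.trans ?_
    have c3 : i / L * dist z (Bo.ray y β L) ≤ i / L * (2 * t) :=
      mul_le_mul_of_nonneg_left hend (by positivity)
    refine c3.trans ?_
    rw [div_mul_eq_mul_div, div_le_iff₀ hL0]
    have c4 : η * (i * (2 * t) / η) = i * (2 * t) := by field_simp
    have c5 : i * (2 * t) / η ≤ L := by linarith
    calc i * (2 * t) = η * (i * (2 * t) / η) := c4.symm
      _ ≤ η * L := mul_le_mul_of_nonneg_left c5 hη.le
  have hγz : dist (γ i) z = L - i := by
    have := hγ.2.2 i ⟨hi.le, hLi⟩ L ⟨hL0.le, le_rfl⟩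
    rw [hγ.2.1, abs_sub_comm, abs_of_nonneg (by linarith)] at this
    exact this
  have d1 := dist_triangle (Bo.ray x₀ α (t + i)) (γ i) z
  have d2 := dist_triangle (Bo.ray x₀ α (t + i)) (Bo.ray y β i) (γ i)
  rw [dist_comm (Bo.ray y β i)] at d2
  linarith

/-- Distinct boundary points are kept apart by infinitely many group elements. -/
lemma exists_frequently_le_bdist (hX : CAT0 X) (hgeo : GeometricAction G X)
    (Bo : BoundaryStruct G X Bd) (x₀ : X) {α β : Bd} (h : α ≠ β) :
    ∃ c > 0, ∃ᶠ g : G in cofinite, c ≤ bdist Bo x₀ (g • α) (g • β) := by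
  obtain ⟨R, hR0, hR⟩ := hgeo.2.2 x₀
  obtain ⟨t₀, ht₀, δ, hδ, hdiv⟩ := exists_divergence hX Bo x₀ h
  obtain ⟨n, hn⟩ := exists_nat_ge ((2 * R + 1) / δ)
  rw [div_le_iff₀ hδ] at hn
  refine ⟨1 / 2 ^ (n + 1), by positivity, frequently_of_ray (Bo.isRay x₀ α) x₀ hR ?_⟩
  filter_upwards [eventually_ge_atTop t₀] with t ht g hg
  apply le_bdist
  have hn0 : (0 : ℝ) ≤ n := n.cast_nonneg
  rw [ray_smul_dist hgeo.1, inv_inv]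
  set y := Bo.ray x₀ α t with hy
  have h1 := hdiv t ht (n + 1) (by positivity)
  have h2 := Bo.dist_ray_le hX y (g • x₀) α (t := n + 1) (by positivity)
  have h3 := Bo.dist_ray_le hX y (g • x₀) β (t := n + 1) (by positivity)
  rw [hy, Bo.ray_shift hX x₀ α (by linarith) (by positivity), ← hy] at h2
  have h4 := dist_triangle4 (Bo.ray x₀ α (t + (n + 1))) (Bo.ray (g • x₀) α (n + 1))
    (Bo.ray (g • x₀) β (n + 1)) (Bo.ray y β (n + 1))
  rw [dist_comm (Bo.ray (g • x₀) β (n + 1))] at h4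
  nlinarith

end Boundary
/-! ### Bounded separating sets -/

section Sides

variable {X : Type*} [MetricSpace X]

/-- `P` and `Q` are the two sides of the separating set `F`: they partition the complement of `F`,
and a connected set avoiding `F` stays on one side. -/
structure Sides (F P Q : Set X) : Prop where
  disj : Disjoint P Q
  union : P ∪ Q = Fᶜ
  left : ∀ S : Set X, IsPreconnected S → S ⊆ Fᶜ → (S ∩ P).Nonempty → S ⊆ P
  right : ∀ S : Set X, IsPreconnected S → S ⊆ Fᶜ → (S ∩ Q).Nonempty → S ⊆ Q

lemma Sides.symm {F P Q : Set X} (h : Sides F P Q) : Sides F Q P :=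
  ⟨h.disj.symm, by rw [union_comm, h.union], h.right, h.left⟩

lemma Sides.of_connectedComponentIn {F : Set X} {a b : X}
    (hne : connectedComponentIn Fᶜ a ≠ connectedComponentIn Fᶜ b)
    (hU : connectedComponentIn Fᶜ a ∪ connectedComponentIn Fᶜ b = Fᶜ) :
    Sides F (connectedComponentIn Fᶜ a) (connectedComponentIn Fᶜ b) := by
  have aux : ∀ (c : X) (S : Set X), IsPreconnected S → S ⊆ Fᶜ →
      (S ∩ connectedComponentIn Fᶜ c).Nonempty → S ⊆ connectedComponentIn Fᶜ c := by
    rintro c S hS hSF ⟨x, hxS, hxc⟩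
    rw [connectedComponentIn_eq hxc]
    exact hS.subset_connectedComponentIn hxS hSF
  refine ⟨?_, hU, aux a, aux b⟩
  rw [Set.disjoint_left]
  intro x hxa hxb
  exact hne ((connectedComponentIn_eq hxa).trans (connectedComponentIn_eq hxb).symm)

/-- A ball avoiding `F` lies on one side. -/
lemma Sides.mem_of_dist_le (hX : CAT0 X) {F P Q : Set X} (h : Sides F P Q) {y z : X} {r : ℝ}
    (hy : y ∈ P) (hr : ∀ f ∈ F, r < dist y f) (hyz : dist y z ≤ r) : z ∈ P := by
  obtain ⟨γ, h0, h1, h2⟩ := hX.1 y z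
  have hc : ContinuousOn γ (Icc 0 (dist y z)) := by
    have : LipschitzOnWith 1 γ (Icc 0 (dist y z)) := by
      apply LipschitzOnWith.of_dist_le_mul
      intro u hu v hv
      rw [h2 u hu v hv, Real.dist_eq]; simp
    exact this.continuousOn
  have hS := isPreconnected_Icc.image γ hc
  have h0m : (0 : ℝ) ∈ Icc 0 (dist y z) := ⟨le_rfl, dist_nonneg⟩
  refine h.left _ hS ?_ ⟨y, ⟨0, h0m, h0⟩, hy⟩ ⟨dist y z, ⟨dist_nonneg, le_rfl⟩, h1⟩
  rintro _ ⟨t, ht, rfl⟩ hF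
  have a1 := hr _ hF
  have a2 := h2 0 h0m t ht
  rw [h0, zero_sub, abs_neg, abs_of_nonneg ht.1] at a2
  linarith [ht.2]

lemma IsGeodesicRay.eventually_far {F : Set X} (hF : Bornology.IsBounded F) {ξ : ℝ → X}
    (hξ : IsGeodesicRay ξ) (T : ℝ) : ∀ᶠ t in atTop, ∀ f ∈ F, T < dist (ξ t) f := by
  obtain ⟨K, hK⟩ := hF.subset_closedBall (ξ 0)
  filter_upwards [eventually_gt_atTop (K + T), eventually_ge_atTop 0] with t ht ht0 f hf
  have h1 := hξ.dist_start ht0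
  have h2 := hK hf
  rw [Metric.mem_closedBall] at h2
  have h3 := dist_triangle (ξ 0) f (ξ t)
  rw [dist_comm (ξ 0) f, dist_comm f (ξ t)] at h3
  linarith

lemma Sides.ray_eventually {F P Q : Set X} (h : Sides F P Q) (hF : Bornology.IsBounded F)
    {ξ : ℝ → X} (hξ : IsGeodesicRay ξ) :
    (∀ᶠ t in atTop, ξ t ∈ P) ∨ (∀ᶠ t in atTop, ξ t ∈ Q) := by
  obtain ⟨T, hT⟩ := eventually_atTop.1 ((hξ.eventually_far hF 0).and (eventually_ge_atTop 0))
  have hS : IsPreconnected (ξ '' Ici T) :=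
    isPreconnected_Ici.image ξ (hξ.continuousOn.mono fun t ht => (hT t ht).2)
  have hSF : ξ '' Ici T ⊆ Fᶜ := by
    rintro _ ⟨t, ht, rfl⟩ hf
    have := (hT t ht).1 _ hf
    rw [dist_self] at this
    exact lt_irrefl _ this
  have hm : ξ T ∈ ξ '' Ici T := ⟨T, self_mem_Ici, rfl⟩
  have hTF := hSF hm
  rw [← h.union] at hTF
  rcases hTF with hp | hq
  · left
    filter_upwards [eventually_ge_atTop T] with t ht
    exact h.left _ hS hSF ⟨_, hm, hp⟩ ⟨t, ht, rfl⟩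
  · right
    filter_upwards [eventually_ge_atTop T] with t ht
    exact h.right _ hS hSF ⟨_, hm, hq⟩ ⟨t, ht, rfl⟩

/-- The side of the far end of a ray depends only on its asymptotic class. -/
lemma Sides.eventually_of_asymptotic (hX : CAT0 X) {F P Q : Set X} (h : Sides F P Q)
    (hF : Bornology.IsBounded F) {ξ ζ : ℝ → X} (hξ : IsGeodesicRay ξ) (hA : Asymptotic ξ ζ)
    (hP : ∀ᶠ t in atTop, ξ t ∈ P) : ∀ᶠ t in atTop, ζ t ∈ P := by
  obtain ⟨C, hC⟩ := hA
  filter_upwards [hP, hξ.eventually_far hF C, eventually_ge_atTop 0] with t h1 h2 h3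
  exact h.mem_of_dist_le hX h1 h2 (hC t h3)

lemma Sides.exists_crossing {F P Q : Set X} (h : Sides F P Q) {ξ : ℝ → X}
    (hξ : IsGeodesicRay ξ) (h0 : ξ 0 ∈ Q) (hP : ∀ᶠ t in atTop, ξ t ∈ P) :
    ∃ t ≥ 0, ξ t ∈ F := by
  by_contra! hc
  obtain ⟨t, ht, ht0⟩ := (hP.and (eventually_ge_atTop 0)).exists
  have hS : IsPreconnected (ξ '' Ici 0) := isPreconnected_Ici.image ξ hξ.continuousOn
  have hSF : ξ '' Ici 0 ⊆ Fᶜ := by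
    rintro _ ⟨t, ht, rfl⟩
    exact hc t ht
  have := h.right _ hS hSF ⟨_, ⟨0, self_mem_Ici, rfl⟩, h0⟩ ⟨t, ht0, rfl⟩
  exact h.disj.le_bot ⟨ht, this⟩

/-- Two rays from a common origin with far ends on different sides cannot both avoid `F`. -/
lemma Sides.exists_hit {F P Q : Set X} (h : Sides F P Q) {ξ ζ : ℝ → X}
    (hξ : IsGeodesicRay ξ) (hζ : IsGeodesicRay ζ) (h0 : ξ 0 = ζ 0)
    (hP : ∀ᶠ t in atTop, ξ t ∈ P) (hQ : ∀ᶠ t in atTop, ζ t ∈ Q) :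
    ∃ t ≥ 0, ξ t ∈ F ∨ ζ t ∈ F := by
  by_contra! hc
  have h1 : ξ 0 ∈ P := by
    have : ξ 0 ∈ P ∪ Q := by rw [h.union]; exact (hc 0 le_rfl).1
    refine this.resolve_right fun hq => ?_
    obtain ⟨t, ht, hf⟩ := h.exists_crossing hξ hq hP
    exact (hc t ht).1 hf
  obtain ⟨t, ht, hf⟩ := h.symm.exists_crossing hζ (h0 ▸ h1) hQ
  exact (hc t ht).2 hf

/-- Rays issuing from a common point of `Q` at distance at least `T` from `F` and ending in `P`
both pass through the bounded set `F`, hence are `2 * D / T`-close per unit of time before. -/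
lemma Sides.dist_le_of_crossing (hX : CAT0 X) {F P Q : Set X} (h : Sides F P Q) {D : ℝ}
    (hD : ∀ f ∈ F, ∀ f' ∈ F, dist f f' ≤ D) {ξ ζ : ℝ → X} (hξ : IsGeodesicRay ξ)
    (hζ : IsGeodesicRay ζ) (h0 : ξ 0 = ζ 0) (hQ : ξ 0 ∈ Q) {T : ℝ} (hT0 : 0 < T)
    (hT : ∀ f ∈ F, T < dist (ξ 0) f) (hξP : ∀ᶠ t in atTop, ξ t ∈ P)
    (hζP : ∀ᶠ t in atTop, ζ t ∈ P) {t : ℝ} (ht : 0 ≤ t) (htT : t ≤ T) :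
    dist (ξ t) (ζ t) ≤ t / T * (2 * D) := by
  obtain ⟨a, ha, haF⟩ := h.exists_crossing hξ hQ hξP
  obtain ⟨b, hb, hbF⟩ := h.exists_crossing hζ (h0 ▸ hQ) hζP
  have haT := hT _ haF
  have hd := hD _ haF _ hbF
  have hD0 : 0 ≤ D := dist_nonneg.trans hd
  have e1 := hξ.dist_start ha
  have e2 := hζ.dist_start hb
  rw [← h0] at e2
  rw [e1] at haT
  have hab : |b - a| ≤ D := by
    refine le_trans ?_ hd
    rw [abs_le]
    constructor
    · have := dist_triangle (ξ 0) (ζ b) (ξ a)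
      rw [dist_comm (ζ b)] at this
      linarith
    · have := dist_triangle (ξ 0) (ξ a) (ζ b)
      linarith
  have h1 : dist (ξ a) (ζ a) ≤ 2 * D := by
    have := dist_triangle (ξ a) (ζ b) (ζ a)
    rw [hζ b hb a ha] at this
    linarith
  have ha0 : 0 < a := by linarith
  refine (hξ.dist_le_of_start_eq hX hζ h0 ht (htT.trans haT.le) ha0).trans ?_
  have h2 : t / a ≤ t / T := div_le_div_of_nonneg_left ht hT0 haT.le
  calc t / a * dist (ξ a) (ζ a) ≤ t / a * (2 * D) := mul_le_mul_of_nonneg_left h1 (by positivity)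
    _ ≤ t / T * (2 * D) := mul_le_mul_of_nonneg_right h2 (by positivity)

end Sides

/-! ### Contraction of pairs of boundary points -/

section Contraction

variable {G X Bd : Type*} [Group G] [MetricSpace X] [MulAction G X] [MulAction G Bd]

/-- The fixed-point set of an element with finite centralizer is bounded: the elements `g` with
`g • x₀` near the fixed-point set give finitely many conjugates `g⁻¹ * s * g`, and the elements
giving the same conjugate differ by the centralizer. -/
lemma isBounded_fixed (hgeo : GeometricAction G X) (x₀ : X) (s : G)
    (hZ : {h : G | s * h = h * s}.Finite) : Bornology.IsBounded {x : X | s • x = x} := by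
  obtain ⟨hiso, hprop, hcoc⟩ := hgeo
  obtain ⟨R, hR0, hR⟩ := hcoc x₀
  set A : Set G := {g | dist x₀ ((g⁻¹ * s * g) • x₀) ≤ 2 * R} with hA
  have hAfin : A.Finite := by
    refine Set.Finite.of_finite_fibers (fun g => g⁻¹ * s * g) ((hprop x₀ (2 * R)).subset ?_) ?_
    · rintro _ ⟨g, hg, rfl⟩
      exact hg
    · rintro _ ⟨g₀, hg₀, rfl⟩
      refine (hZ.image (fun h => h * g₀)).subset ?_
      rintro g ⟨-, hg⟩
      simp only [mem_preimage, mem_singleton_iff] at hg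
      refine ⟨g * g₀⁻¹, ?_, by simp⟩
      have : s = g * (g₀⁻¹ * s * g₀) * g⁻¹ := by rw [← hg]; group
      change s * (g * g₀⁻¹) = g * g₀⁻¹ * s
      conv_lhs => rw [this]
      group
  have hsub : {x : X | s • x = x} ⊆ ⋃ g ∈ A, Metric.closedBall (g • x₀) R := by
    intro x hx
    obtain ⟨g, hg⟩ := hR x
    refine mem_biUnion (x := g) ?_ hg
    have h1 : dist x₀ ((g⁻¹ * s * g) • x₀) = dist (g • x₀) (s • g • x₀) := by
      rw [← hiso g, smul_smul g, smul_smul s]; congr 2; group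
    have h2 : dist (s • x) (s • g • x₀) ≤ R := by rwa [hiso]
    rw [mem_ofPred_eq] at hx
    rw [hx] at h2
    rw [hA, mem_ofPred_eq, h1]
    have := dist_triangle (g • x₀) x (s • g • x₀)
    rw [dist_comm _ x] at this
    linarith
  exact ((Bornology.isBounded_biUnion hAfin).2 fun g _ => Metric.isBounded_closedBall).subset hsub

/-- Two boundary points on the side `P` of a bounded separating set are brought together by the
elements `g` for which `g⁻¹ • x₀` lies deep in the other side. -/
lemma frequently_bdist_lt_of_sides (hX : CAT0 X) (hgeo : GeometricAction G X)
    (Bo : BoundaryStruct G X Bd) (x₀ : X) {F P Q : Set X} (h : Sides F P Q)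
    (hF : Bornology.IsBounded F) {α β γ : Bd}
    (hα : ∀ᶠ t in atTop, Bo.ray x₀ α t ∈ P) (hβ : ∀ᶠ t in atTop, Bo.ray x₀ β t ∈ P)
    (hγ : ∀ᶠ t in atTop, Bo.ray x₀ γ t ∈ Q) {ε : ℝ} (hε : 0 < ε) :
    ∃ᶠ g : G in cofinite, bdist Bo x₀ (g • α) (g • β) < ε := by
  obtain ⟨R, hR0, hR⟩ := hgeo.2.2 x₀
  obtain ⟨n, δ, hδ, hn⟩ := exists_bdist_lt hX Bo x₀ hε
  obtain ⟨D₀, hD₀⟩ := Metric.isBounded_iff.1 hF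
  set D := max D₀ 0
  have hD : ∀ f ∈ F, ∀ f' ∈ F, dist f f' ≤ D := fun f hf f' hf' =>
    (hD₀ hf hf').trans (le_max_left _ _)
  have hD0 : 0 ≤ D := le_max_right _ _
  -- `T` is large enough that `n / T * (2 * D) ≤ δ`
  set T : ℝ := n + 1 + n * (2 * D) / δ with hTdef
  have hq : 0 ≤ n * (2 * D) / δ := by positivity
  have hn0 : (0 : ℝ) ≤ n := n.cast_nonneg
  have hT0 : 0 < T := by linarith
  refine frequently_of_ray (Bo.isRay x₀ γ) x₀ hR ?_
  filter_upwards [hγ, (Bo.isRay x₀ γ).eventually_far hF (T + R)] with t ht hfar g hg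
  have hQ : g • x₀ ∈ Q := h.symm.mem_of_dist_le hX ht (fun f hf => by linarith [hfar f hf]) hg
  have hTf : ∀ f ∈ F, T < dist (g • x₀) f := fun f hf => by
    linarith [hfar f hf, dist_triangle (Bo.ray x₀ γ t) (g • x₀) f]
  apply hn
  rw [ray_smul_dist hgeo.1, inv_inv]
  refine (h.dist_le_of_crossing hX hD (Bo.isRay _ α) (Bo.isRay _ β)
    (by rw [Bo.ray_start, Bo.ray_start]) (by rwa [Bo.ray_start]) hT0
    (by rwa [Bo.ray_start])
    (h.eventually_of_asymptotic hX hF (Bo.isRay x₀ α) (Bo.ray_asymp _ _ α) hα)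
    (h.eventually_of_asymptotic hX hF (Bo.isRay x₀ β) (Bo.ray_asymp _ _ β) hβ)
    hn0 (by linarith)).trans ?_
  rw [div_mul_eq_mul_div, div_le_iff₀ hT0]
  have : δ * (n * (2 * D) / δ) = n * (2 * D) := by field_simp
  nlinarith

/-- If every translate of the bounded set `F` separated `α` from `β`, the orbit of `x₀`, and with
it the whole space, would lie near the two rays towards `α` and `β`, leaving no room for a third
boundary point. -/
lemma exists_same_side (hX : CAT0 X) (hgeo : GeometricAction G X)
    (Bo : BoundaryStruct G X Bd) (x₀ : X) {F P Q : Set X} (h : Sides F P Q)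
    (hF : Bornology.IsBounded F) {α β γ : Bd} (hγα : γ ≠ α) (hγβ : γ ≠ β) :
    ∃ g : G,
      ((∀ᶠ t in atTop, Bo.ray x₀ (g • α) t ∈ P) ∧ (∀ᶠ t in atTop, Bo.ray x₀ (g • β) t ∈ P)) ∨
      ((∀ᶠ t in atTop, Bo.ray x₀ (g • α) t ∈ Q) ∧ (∀ᶠ t in atTop, Bo.ray x₀ (g • β) t ∈ Q)) := by
  by_contra! hno
  obtain ⟨hiso, -, hcoc⟩ := hgeo
  obtain ⟨R, hR0, hR⟩ := hcoc x₀
  obtain ⟨K₀, hK₀⟩ := hF.subset_closedBall x₀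
  have hhit : ∀ g : G, ∃ t ≥ 0,
      dist (g • x₀) (Bo.ray x₀ α t) ≤ K₀ ∨ dist (g • x₀) (Bo.ray x₀ β t) ≤ K₀ := by
    intro g
    have key : ∃ t ≥ 0, Bo.ray (g⁻¹ • x₀) (g⁻¹ • α) t ∈ F ∨
        Bo.ray (g⁻¹ • x₀) (g⁻¹ • β) t ∈ F := by
      have hst : Bo.ray (g⁻¹ • x₀) (g⁻¹ • α) 0 = Bo.ray (g⁻¹ • x₀) (g⁻¹ • β) 0 := by
        rw [Bo.ray_start, Bo.ray_start]
      have tr : ∀ (δ : Bd) {P' Q' : Set X}, Sides F P' Q' →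
          (∀ᶠ t in atTop, Bo.ray x₀ δ t ∈ P') →
          ∀ᶠ t in atTop, Bo.ray (g⁻¹ • x₀) δ t ∈ P' := fun δ P' Q' h' =>
        h'.eventually_of_asymptotic hX hF (Bo.isRay x₀ δ) (Bo.ray_asymp _ _ δ)
      obtain ⟨n1, n2⟩ := hno g⁻¹
      rcases h.ray_eventually hF (Bo.isRay x₀ (g⁻¹ • α)) with ha | ha <;>
      rcases h.ray_eventually hF (Bo.isRay x₀ (g⁻¹ • β)) with hb | hb
      · exact (n1 ha (hb.mono fun _ h h' => h' h)).elim
      · exact h.exists_hit (Bo.isRay _ _) (Bo.isRay _ _) hst (tr _ h ha) (tr _ h.symm hb)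
      · exact h.symm.exists_hit (Bo.isRay _ _) (Bo.isRay _ _) hst (tr _ h.symm ha) (tr _ h hb)
      · exact (n2 ha (hb.mono fun _ h h' => h' h)).elim
    obtain ⟨t, ht, hf⟩ := key
    have mv : ∀ δ : Bd, Bo.ray (g⁻¹ • x₀) (g⁻¹ • δ) t ∈ F →
        dist (g • x₀) (Bo.ray x₀ δ t) ≤ K₀ := by
      intro δ hδ
      rw [← Bo.equivariant] at hδ
      have := hK₀ hδ
      rw [Metric.mem_closedBall, ← hiso g, smul_inv_smul, dist_comm] at this
      exact this
    exact ⟨t, ht, hf.imp (mv α) (mv β)⟩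
  obtain ⟨a, ha, hda⟩ := exists_dist_pos Bo x₀ hγα (2 * (R + K₀))
  obtain ⟨b, hb, hdb⟩ := exists_dist_pos Bo x₀ hγβ (2 * (R + K₀))
  set n := max a b with hn
  have hn0 : 0 ≤ n := ha.trans (le_max_left _ _)
  obtain ⟨g, hg⟩ := hR (Bo.ray x₀ γ n)
  obtain ⟨t, ht, hor⟩ := hhit g
  have fin : ∀ (δ : Bd) (c : ℝ), 0 ≤ c → c ≤ n →
      2 * (R + K₀) < dist (Bo.ray x₀ γ c) (Bo.ray x₀ δ c) →
      dist (g • x₀) (Bo.ray x₀ δ t) ≤ K₀ → False := by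
    intro δ c hc hcn hlt hle
    have h1 := (Bo.isRay x₀ γ).dist_mono hX (Bo.isRay x₀ δ)
      (by rw [Bo.ray_start, Bo.ray_start]) hc hcn
    have h2 := dist_triangle (Bo.ray x₀ γ n) (g • x₀) (Bo.ray x₀ δ t)
    have e1 := (Bo.isRay x₀ γ).dist_start hn0
    have e2 := (Bo.isRay x₀ δ).dist_start ht
    rw [Bo.ray_start] at e1 e2
    -- both points are at nearly the same distance from `x₀`
    have h3 : |t - n| ≤ R + K₀ := by
      rw [abs_le]
      constructor
      · have := dist_triangle x₀ (Bo.ray x₀ δ t) (Bo.ray x₀ γ n)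
        rw [dist_comm (Bo.ray x₀ δ t)] at this
        linarith
      · have := dist_triangle x₀ (Bo.ray x₀ γ n) (Bo.ray x₀ δ t)
        linarith
    have h4 := (Bo.isRay x₀ δ) t ht n hn0
    have h5 := dist_triangle (Bo.ray x₀ γ n) (Bo.ray x₀ δ t) (Bo.ray x₀ δ n)
    linarith
  rcases hor with hle | hle
  · exact fin α a ha (le_max_left _ _) hda hle
  · exact fin β b hb (le_max_right _ _) hdb hle

/-- A group element exchanging the two sides of a bounded fixed-point set carries a boundary point
on one side to a boundary point on the other. -/
lemma Sides.exists_boundary (hX : CAT0 X) (Bo : BoundaryStruct G X Bd) (x₀ : X) {F P Q : Set X}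
    (h : Sides F P Q) (hF : Bornology.IsBounded F) (r : G) (hPQ : ∀ x ∈ P, r • x ∈ Q)
    (hQP : ∀ x ∈ Q, r • x ∈ P) (α : Bd) :
    (∃ γ, ∀ᶠ t in atTop, Bo.ray x₀ γ t ∈ P) ∧ (∃ γ, ∀ᶠ t in atTop, Bo.ray x₀ γ t ∈ Q) := by
  have mv : ∀ {P' Q' : Set X}, Sides F P' Q' → (∀ x ∈ P', r • x ∈ Q') →
      (∀ᶠ t in atTop, Bo.ray x₀ α t ∈ P') → ∃ γ, ∀ᶠ t in atTop, Bo.ray x₀ γ t ∈ Q' := by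
    intro P' Q' h' hm hα
    refine ⟨r • α, h'.symm.eventually_of_asymptotic hX hF (Bo.isRay (r • x₀) (r • α))
      (Bo.ray_asymp _ _ _) ?_⟩
    filter_upwards [hα] with t ht
    rw [← Bo.equivariant]
    exact hm _ ht
  rcases h.ray_eventually hF (Bo.isRay x₀ α) with ha | ha
  · exact ⟨⟨α, ha⟩, mv h hPQ ha⟩
  · exact ⟨mv h.symm hQP ha, ⟨α, ha⟩⟩

lemma frequently_bdist_lt (hX : CAT0 X) (hgeo : GeometricAction G X)
    (Bo : BoundaryStruct G X Bd) (x₀ : X) {F P Q : Set X} (h : Sides F P Q)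
    (hF : Bornology.IsBounded F) (r : G) (hPQ : ∀ x ∈ P, r • x ∈ Q)
    (hQP : ∀ x ∈ Q, r • x ∈ P) {α β γ : Bd} (hγα : γ ≠ α) (hγβ : γ ≠ β) {ε : ℝ} (hε : 0 < ε) :
    ∃ᶠ g : G in cofinite, bdist Bo x₀ (g • α) (g • β) < ε := by
  obtain ⟨⟨p, hp⟩, ⟨q, hq⟩⟩ := h.exists_boundary hX Bo x₀ hF r hPQ hQP α
  obtain ⟨k, hk⟩ := exists_same_side hX hgeo Bo x₀ h hF hγα hγβ
  have key : ∃ᶠ g : G in cofinite, bdist Bo x₀ (g • k • α) (g • k • β) < ε := by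
    rcases hk with ⟨h1, h2⟩ | ⟨h1, h2⟩
    · exact frequently_bdist_lt_of_sides hX hgeo Bo x₀ h hF h1 h2 hq hε
    · exact frequently_bdist_lt_of_sides hX hgeo Bo x₀ h.symm hF h1 h2 hp hε
  refine (mul_left_injective k).tendsto_cofinite.frequently (key.mono fun g hg => ?_)
  rwa [smul_smul, smul_smul] at hg

end Contraction

lemma MoreThanTwo.exists_ne_ne {Bd : Type*} (h : MoreThanTwo Bd) (α β : Bd) :
    ∃ γ : Bd, γ ≠ α ∧ γ ≠ β := by
  obtain ⟨p, q, r, hpq, hpr, hqr⟩ := h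
  by_contra! hc
  have h1 := hc p
  have h2 := hc q
  have h3 := hc r
  clear hc
  rcases eq_or_ne p α with a | a <;> rcases eq_or_ne q α with b | b <;>
    rcases eq_or_ne r α with c | c <;> grind

/-- Corollary 7.2. Let `(W,S)` be a Coxeter system acting
geometrically on a CAT(0) space `X` with basepoint `x₀` and `|∂X| > 2`, and suppose
the generator `s ∈ S` acts on `X` as a reflection.  If the centralizer
`Z_s = { h ∈ W : sh = hs }` of `s` in `W` is finite, then `∂X` is a scrambled set. -/
theorem coxeter_scrambled_of_finite_centralizer {B W X Bd : Type*} [Finite B] [Group W]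
    [MetricSpace X] [MulAction W X] [MulAction W Bd]
    {M : CoxeterMatrix B} (cs : CoxeterSystem M W)
    (hCAT : CAT0 X) (hgeo : GeometricAction W X)
    (Bo : BoundaryStruct W X Bd) (x₀ : X) (hcard : MoreThanTwo Bd)
    (s : B) (hrefl : ActsAsReflection W (X := X) (cs.simple s))
    (hZ : {h : W | cs.simple s * h = h * cs.simple s}.Finite) :
    IsScrambled Bo x₀ := by
  set F : Set X := {x : X | cs.simple s • x = x} with hFdef
  have hF : Bornology.IsBounded F := isBounded_fixed hgeo x₀ _ hZ
  obtain ⟨hinv, a, b, -, -, hne, hU, -, -, hsw⟩ := hrefl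
  have hS := Sides.of_connectedComponentIn hne hU
  intro α β hαβ
  obtain ⟨γ, hγα, hγβ⟩ := hcard.exists_ne_ne α β
  have hPQ : ∀ x ∈ connectedComponentIn Fᶜ a, cs.simple s • x ∈ connectedComponentIn Fᶜ b := by
    intro x hx
    rw [← hsw]
    exact ⟨x, hx, rfl⟩
  have hQP : ∀ x ∈ connectedComponentIn Fᶜ b, cs.simple s • x ∈ connectedComponentIn Fᶜ a := by
    intro x hx
    rw [← hsw] at hx
    obtain ⟨y, hy, rfl⟩ := hx
    change cs.simple s • cs.simple s • y ∈ _
    rwa [hinv]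
  have hsmall := fun (ε : ℝ) (hε : 0 < ε) =>
    frequently_bdist_lt hCAT hgeo Bo x₀ hS hF (cs.simple s) hPQ hQP hγα hγβ hε
  obtain ⟨c, hc, hlarge⟩ := exists_frequently_le_bdist hCAT hgeo Bo x₀ hαβ
  have hab : IsBoundedUnder (· ≤ ·) cofinite (fun g : W => bdist Bo x₀ (g • α) (g • β)) :=
    isBoundedUnder_of ⟨_, fun g => bdist_le_tsum Bo x₀ _ _⟩
  have hbe : IsBoundedUnder (· ≥ ·) cofinite (fun g : W => bdist Bo x₀ (g • α) (g • β)) :=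
    isBoundedUnder_of ⟨0, fun g => bdist_nonneg Bo x₀ _ _⟩
  have : NeBot (cofinite : Filter W) :=
    ⟨fun h => by rw [h] at hlarge; exact frequently_bot hlarge⟩
  refine ⟨hc.trans_le (le_limsup_of_frequently_le hlarge hab), le_antisymm ?_ ?_⟩
  · apply le_of_forall_pos_le_add
    intro ε hε
    rw [zero_add]
    exact liminf_le_of_frequently_le ((hsmall ε hε).mono fun g hg => hg.le) hbe
  · exact le_liminf_of_le hab.isCoboundedUnder_ge
      (Eventually.of_forall fun g => bdist_nonneg Bo x₀ _ _)
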